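/- Let γ ≥ 1/2 be a half-integer, ε ∈ {0, 1/2}, and j ∈ ℂ with 2j ∉ ℤ. Then for every M ∈ ε + γ + ℤ, the restriction Q_M of the Casimir 𝒬 of F_γ ⊗ C^ε_j to V_M is diagonalizable, and its eigenvalues are exactly the 2γ+1 pairwise distinct values q_(μ) = −(j+μ)(j+μ+1), μ ∈ {−γ, −γ+1, …, γ}. Consequently 𝒬 is diagonalizable on F_γ ⊗ C^ε_j. -/

import Mathlib

/-!
Why the theorem holds. Realize `F_γ` on polynomials homogeneous of degree `G = 2γ` in `x, y`, and
`C^ε_j` on the monomials `u^(j+m) v^(j-m)`. The form `w = yu - xv` is invariant, so the Casimir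
commutes with multiplication by `w`. On `y^(G-k) u^a v^b` with `a + b = 2j - k` the Casimir is the
scalar `-(j+γ-k)(j+γ-k+1)` up to a term divisible by `w`. Hence in the basis
`wᵏ y^(G-k) u^a v^b`, `0 ≤ k ≤ G`, of `V_M` the Casimir is bidiagonal, and its diagonal entries are
the `q_(μ)`. They are pairwise distinct because `2j ∉ ℤ`, so the Casimir is diagonalizable on `V_M`
with exactly these eigenvalues.

In coordinates the realization amounts to a rescaling of the product basis that removes the square
roots (`exists_monomial_vectors`), and `wᵏ y^(G-k) u^a v^b` expands with signed binomial
coefficients (`bidiagonal_of_tridiagonal`). The linear algebra of triangular operators is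
`diagOn_of_triangular`. Finally, every product basis vector lies in some `V_M`, which gives
diagonalizability on the whole space.
-/

/-!
Couplings F_γ ⊗ C^ε_j for sl(2,ℝ).

Conventions: γ = G/2 with `G : ℕ`, `1 ≤ G`; ε is encoded by `E : ℂ` (with `E = 0 ∨ E = 1/2`);
j ∈ ℂ. The space F_γ ⊗ C^ε_j has basis indexed by `(ν, z) : Fin (G+1) × ℤ`, the basis vector
`single (ν,z) 1` representing |γ, ν-γ⟩ ⊗ |j, ε+z⟩.
-/

noncomputable section

/-- Principal branch of the complex square root. -/
def csqrt (z : ℂ) : ℂ := z ^ ((1 : ℂ) / 2)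

/-- C₊(j,m) = i √(j-m) √(j+m+1). -/
def Cp (j m : ℂ) : ℂ := Complex.I * csqrt (j - m) * csqrt (j + m + 1)

/-- C₋(j,m) = i √(j+m) √(j-m+1). -/
def Cm (j m : ℂ) : ℂ := Complex.I * csqrt (j + m) * csqrt (j - m + 1)

/-- γ = G/2, as a complex number. -/
def gam (G : ℕ) : ℂ := (G : ℂ) / 2

/-- μ = ν - γ for ν : Fin (G+1). -/
def muc (G : ℕ) (ν : Fin (G + 1)) : ℂ := ((ν : ℕ) : ℂ) - gam G

/-- m = ε + z for z : ℤ. -/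
def mcont (E : ℂ) (z : ℤ) : ℂ := E + (z : ℂ)

/-- The vector space F_γ ⊗ C^ε_j. -/
abbrev Wc (G : ℕ) := (Fin (G + 1) × ℤ) →₀ ℂ

/-- Basis vector with coefficient, out-of-range F_γ indices giving 0. -/
def eVc (G : ℕ) (i : ℤ) (z : ℤ) (c : ℂ) : Wc G :=
  if h : 0 ≤ i ∧ i < (G : ℤ) + 1 then
    Finsupp.single ((⟨i.toNat, by omega⟩ : Fin (G + 1)), z) c
  else 0

/-- 𝒥₀ = J₀ ⊗ 1 + 1 ⊗ J₀. -/
def J0c (G : ℕ) (E : ℂ) : Wc G →ₗ[ℂ] Wc G :=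
  Finsupp.lsum ℂ fun p => LinearMap.toSpanSingleton ℂ (Wc G)
    (Finsupp.single p (muc G p.1 + mcont E p.2))

/-- 𝒥₊ = J₊ ⊗ 1 + 1 ⊗ J₊. -/
def Jpc (G : ℕ) (j E : ℂ) : Wc G →ₗ[ℂ] Wc G :=
  Finsupp.lsum ℂ fun p => LinearMap.toSpanSingleton ℂ (Wc G)
    (eVc G ((p.1 : ℕ) + 1) p.2 (Cp (gam G) (muc G p.1)) +
      Finsupp.single (p.1, p.2 + 1) (Cp j (mcont E p.2)))

/-- 𝒥₋ = J₋ ⊗ 1 + 1 ⊗ J₋. -/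
def Jmc (G : ℕ) (j E : ℂ) : Wc G →ₗ[ℂ] Wc G :=
  Finsupp.lsum ℂ fun p => LinearMap.toSpanSingleton ℂ (Wc G)
    (eVc G ((p.1 : ℕ) - 1) p.2 (Cm (gam G) (muc G p.1)) +
      Finsupp.single (p.1, p.2 - 1) (Cm j (mcont E p.2)))

/-- The Casimir 𝒬 = -𝒥₀(𝒥₀+1) + 𝒥₋𝒥₊. -/
def Qc (G : ℕ) (j E : ℂ) : Wc G →ₗ[ℂ] Wc G :=
  -(J0c G E ∘ₗ (J0c G E + LinearMap.id)) + Jmc G j E ∘ₗ Jpc G j E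

/-- The 𝒥₀-eigenvalue-M subspace V_M of F_γ ⊗ C^ε_j for M = ε + γ + M₀, M₀ : ℤ:
spanned by the |γ,ν-γ⟩⊗|j,ε+z⟩ with (ν-γ) + (ε+z) = M, i.e. z = G + M₀ - ν. -/
def VMc (G : ℕ) (M₀ : ℤ) : Submodule ℂ (Wc G) :=
  Submodule.span ℂ
    {w : Wc G | ∃ ν : Fin (G + 1), w = Finsupp.single (ν, (G : ℤ) + M₀ - (ν : ℕ)) 1}

/-- q_(μ) = -(j+μ)(j+μ+1) with μ = t - γ. -/
def qc (G : ℕ) (j : ℂ) (t : Fin (G + 1)) : ℂ :=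
  -((j + muc G t) * (j + muc G t + 1))

/-- A linear operator is diagonalizable on an invariant subspace `p` iff `p` is spanned by
eigenvectors of the operator lying in `p`. -/
def DiagOn {V : Type*} [AddCommGroup V] [Module ℂ V]
    (f : V →ₗ[ℂ] V) (p : Submodule ℂ V) : Prop :=
  Submodule.span ℂ {w : V | w ∈ p ∧ ∃ c : ℂ, f w = c • w} = p

/-! ### The operators on the product basis -/

theorem csqrt_mul_self (z : ℂ) : csqrt z * csqrt z = z := by
  have h := Complex.cpow_nat_inv_pow z (n := 2) (by norm_num)
  rw [← sq, csqrt, one_div]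
  exact_mod_cast h

theorem csqrt_zero : csqrt 0 = 0 := by
  simp [csqrt]

theorem csqrt_ne_zero {z : ℂ} (hz : z ≠ 0) : csqrt z ≠ 0 := by
  intro h
  apply hz
  rw [← csqrt_mul_self z, h, mul_zero]

theorem Cp_mul_Cm (j m : ℂ) : Cp j m * Cm j (m + 1) = -((j - m) * (j + m + 1)) := by
  have h1 := csqrt_mul_self (j - m)
  have h2 := csqrt_mul_self (j + m + 1)
  have e1 : j + (m + 1) = j + m + 1 := by ring
  have e2 : j - (m + 1) + 1 = j - m := by ring
  rw [Cp, Cm, e1, e2]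
  calc _ = (Complex.I * Complex.I) * (csqrt (j - m) * csqrt (j - m)) *
        (csqrt (j + m + 1) * csqrt (j + m + 1)) := by ring
    _ = _ := by rw [h1, h2, Complex.I_mul_I]; ring

theorem Cp_ne_zero {j m : ℂ} (h1 : j - m ≠ 0) (h2 : j + m + 1 ≠ 0) : Cp j m ≠ 0 :=
  mul_ne_zero (mul_ne_zero Complex.I_ne_zero (csqrt_ne_zero h1)) (csqrt_ne_zero h2)

theorem Cm_ne_zero {j m : ℂ} (h1 : j + m ≠ 0) (h2 : j - m + 1 ≠ 0) : Cm j m ≠ 0 :=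
  mul_ne_zero (mul_ne_zero Complex.I_ne_zero (csqrt_ne_zero h1)) (csqrt_ne_zero h2)

theorem eVc_of_fin (G : ℕ) (ν : Fin (G + 1)) (z : ℤ) (c : ℂ) :
    eVc G (ν : ℕ) z c = Finsupp.single (ν, z) c := by
  have h : (0 : ℤ) ≤ ((ν : ℕ) : ℤ) ∧ ((ν : ℕ) : ℤ) < (G : ℤ) + 1 := by omega
  rw [eVc, dif_pos h]
  simp

theorem eVc_of_out {G : ℕ} {i : ℤ} (h : ¬ (0 ≤ i ∧ i < (G : ℤ) + 1)) (z : ℤ) (c : ℂ) :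
    eVc G i z c = 0 := dif_neg h

theorem eVc_eq_smul (G : ℕ) (i z : ℤ) (c : ℂ) : eVc G i z c = c • eVc G i z 1 := by
  by_cases h : 0 ≤ i ∧ i < (G : ℤ) + 1
  · simp [eVc, h]
  · simp [eVc_of_out h]

theorem J0c_eVc (G : ℕ) (E : ℂ) (i z : ℤ) :
    J0c G E (eVc G i z 1) = ((i : ℂ) - gam G + mcont E z) • eVc G i z 1 := by
  by_cases h : 0 ≤ i ∧ i < (G : ℤ) + 1
  · obtain ⟨ν, rfl⟩ : ∃ ν : Fin (G + 1), i = ((ν : ℕ) : ℤ) :=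
      ⟨⟨i.toNat, by omega⟩, by simp [h.1]⟩
    rw [eVc_of_fin]
    simp [J0c, muc]
  · simp [eVc_of_out h]

/-- This holds for every integer `i`: at `i = -1`, where the left side is zero by convention,
`C₊(γ, -γ-1) = 0`. -/
theorem Jpc_eVc (G : ℕ) (j E : ℂ) (i z : ℤ) :
    Jpc G j E (eVc G i z 1) = Cp (gam G) ((i : ℂ) - gam G) • eVc G (i + 1) z 1 +
      Cp j (mcont E z) • eVc G i (z + 1) 1 := by
  by_cases h : 0 ≤ i ∧ i < (G : ℤ) + 1
  · obtain ⟨ν, rfl⟩ : ∃ ν : Fin (G + 1), i = ((ν : ℕ) : ℤ) :=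
      ⟨⟨i.toNat, by omega⟩, by simp [h.1]⟩
    rw [← eVc_eq_smul, ← eVc_eq_smul, eVc_of_fin, eVc_of_fin]
    simp [Jpc, muc]
  · rw [eVc_of_out h, eVc_of_out h]
    by_cases h' : 0 ≤ i + 1 ∧ i + 1 < (G : ℤ) + 1
    · obtain rfl : i = -1 := by omega
      have : gam G + (((-1 : ℤ) : ℂ) - gam G) + 1 = 0 := by push_cast; ring
      simp only [Cp, this, csqrt_zero]
      simp
    · simp [eVc_of_out h']

/-- This holds for every integer `i`: at `i = G + 1`, where the left side is zero by
convention, `C₋(γ, γ+1) = 0`. -/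
theorem Jmc_eVc (G : ℕ) (j E : ℂ) (i z : ℤ) :
    Jmc G j E (eVc G i z 1) = Cm (gam G) ((i : ℂ) - gam G) • eVc G (i - 1) z 1 +
      Cm j (mcont E z) • eVc G i (z - 1) 1 := by
  by_cases h : 0 ≤ i ∧ i < (G : ℤ) + 1
  · obtain ⟨ν, rfl⟩ : ∃ ν : Fin (G + 1), i = ((ν : ℕ) : ℤ) :=
      ⟨⟨i.toNat, by omega⟩, by simp [h.1]⟩
    rw [← eVc_eq_smul, ← eVc_eq_smul, eVc_of_fin, eVc_of_fin]
    simp [Jmc, muc]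
  · rw [eVc_of_out h, eVc_of_out h]
    by_cases h' : 0 ≤ i - 1 ∧ i - 1 < (G : ℤ) + 1
    · obtain rfl : i = G + 1 := by omega
      have : gam G - (((G + 1 : ℤ) : ℂ) - gam G) + 1 = 0 := by
        rw [gam]; push_cast; ring
      simp only [Cm, this, csqrt_zero]
      simp
    · simp [eVc_of_out h']

/-- The Casimir is tridiagonal on the product basis of a weight space. -/
theorem Qc_eVc (G : ℕ) (j E : ℂ) (i z : ℤ) (μ m : ℂ) (hμ : μ = (i : ℂ) - gam G)
    (hm : m = mcont E z) :
    Qc G j E (eVc G i z 1) =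
      (-((μ + m) * (μ + m + 1)) - (gam G - μ) * (gam G + μ + 1) - (j - m) * (j + m + 1)) •
        eVc G i z 1 +
      (Cp (gam G) μ * Cm j m) • eVc G (i + 1) (z - 1) 1 +
      (Cm (gam G) μ * Cp j m) • eVc G (i - 1) (z + 1) 1 := by
  have e1 : ((i + 1 : ℤ) : ℂ) - gam G = μ + 1 := by rw [hμ]; push_cast; ring
  have e2 : mcont E (z + 1) = m + 1 := by rw [hm, mcont, mcont]; push_cast; ring
  have h1 := Cp_mul_Cm (gam G) μ
  have h2 := Cp_mul_Cm j m
  simp only [Qc, LinearMap.add_apply, LinearMap.neg_apply, LinearMap.comp_apply,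
    LinearMap.id_apply, J0c_eVc, map_add, map_smul, Jpc_eVc, Jmc_eVc, e1, e2, ← hμ, ← hm,
    add_sub_cancel_right]
  linear_combination (norm := module) h1 • eVc G i z 1 + h2 • eVc G i z 1

/-! ### Linear algebra: triangular operators and the Pascal change of basis -/

/-- An operator which is upper triangular with distinct diagonal entries `q t` in a linearly
independent family `f` is diagonalizable on the span of `f`, with eigenvalues exactly the `q t`. -/
theorem diagOn_of_triangular {W : Type*} [AddCommGroup W] [Module ℂ W] (A : W →ₗ[ℂ] W)
    {n : ℕ} (f : Fin n → W) (hf : LinearIndependent ℂ f) (q : Fin n → ℂ)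
    (hq : Function.Injective q)
    (hA : ∀ t, A (f t) - q t • f t ∈ Submodule.span ℂ (f '' Set.Iio t)) :
    DiagOn A (Submodule.span ℂ (Set.range f)) ∧
      ∀ c : ℂ, (∃ w ∈ Submodule.span ℂ (Set.range f), w ≠ 0 ∧ A w = c • w) ↔
        ∃ t, c = q t := by
  set p := Submodule.span ℂ (Set.range f) with hp
  have hfp : ∀ t, f t ∈ p := fun t => Submodule.subset_span ⟨t, rfl⟩
  have hle : ∀ t, Submodule.span ℂ (f '' Set.Iio t) ≤ p := fun t =>
    Submodule.span_mono (Set.image_subset_range _ _)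
  have hAp : ∀ w ∈ p, A w ∈ p := by
    intro w hw
    have : p ≤ p.comap A := by
      rw [hp, Submodule.span_le]
      rintro _ ⟨t, rfl⟩
      have := p.add_mem (hle t (hA t)) (p.smul_mem (q t) (hfp t))
      simpa using this
    exact this hw
  let F : Module.Basis (Fin n) ℂ p := Module.Basis.span hf
  have hF : ∀ t, (F t : W) = f t := fun t =>
    Module.Basis.coe_span_apply hf t
  have : FiniteDimensional ℂ p := F.finiteDimensional_of_finite
  let A' : Module.End ℂ p := A.restrict hAp
  -- Vectors in the span of the `f r` with `r < t` have no coordinates at or above `t`.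
  have hrepr : ∀ t, ∀ w ∈ Submodule.span ℂ (f '' Set.Iio t), ∀ hw : w ∈ p,
      ∀ s, t ≤ s → F.repr ⟨w, hw⟩ s = 0 := by
    intro t w hwt hw s hs
    have : Submodule.span ℂ (f '' Set.Iio t) ≤
        (LinearMap.ker (F.coord s)).map p.subtype := by
      rw [Submodule.span_le]
      rintro _ ⟨r, hr, rfl⟩
      refine ⟨F r, ?_, hF r⟩
      have hne : r ≠ s := (lt_of_lt_of_le hr hs).ne
      simp [hne]
    obtain ⟨w', hw', rfl⟩ := this hwt
    simpa using hw'
  have hmat : ∀ t s, t ≤ s → LinearMap.toMatrix F F A' s t = if s = t then q t else 0 := by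
    intro t s hs
    have h1 := hrepr t _ (hA t) (hle t (hA t)) s hs
    have h2 : (⟨A (f t) - q t • f t, hle t (hA t)⟩ : p) = A' (F t) - q t • F t := by
      apply Subtype.ext
      simp [A', hF]
    rw [h2, map_sub, map_smul] at h1
    rw [LinearMap.toMatrix_apply]
    simp only [Finsupp.sub_apply, Finsupp.smul_apply, Module.Basis.repr_self, smul_eq_mul,
      Finsupp.single_apply, sub_eq_zero] at h1
    rw [h1]
    simp [eq_comm]
  have hchar : A'.charpoly = ∏ t, (Polynomial.X - Polynomial.C (q t)) := by
    rw [← LinearMap.charpoly_toMatrix A' F, Matrix.charpoly_of_isUpperTriangular]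
    · refine Finset.prod_congr rfl fun t _ => ?_
      rw [hmat t t le_rfl, if_pos rfl]
    · intro s t hst
      rw [hmat t s (le_of_lt hst), if_neg (show s ≠ t from ne_of_gt hst)]
  have hev : ∀ c, A'.HasEigenvalue c ↔ ∃ t, c = q t := by
    intro c
    rw [Module.End.hasEigenvalue_iff_isRoot_charpoly, hchar, Polynomial.IsRoot,
      Polynomial.eval_prod, Finset.prod_eq_zero_iff]
    simp [sub_eq_zero]
  refine ⟨?_, fun c => ?_⟩
  · choose v hv using fun t => ((hev (q t)).2 ⟨t, rfl⟩).exists_hasEigenvector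
    have hli := Module.End.eigenvectors_linearIndependent' A' q hq v hv
    have htop := hli.span_eq_top_of_card_eq_finrank' (Module.finrank_eq_card_basis F).symm
    apply le_antisymm
    · exact Submodule.span_le.2 fun w hw => hw.1
    · have : p = (Submodule.span ℂ (Set.range v)).map p.subtype := by
        rw [htop, Submodule.map_subtype_top]
      refine this.le.trans ?_
      rw [Submodule.map_span, Submodule.span_le]
      rintro _ ⟨_, ⟨t, rfl⟩, rfl⟩
      refine Submodule.subset_span ⟨(v t).2, q t, ?_⟩
      exact congrArg Subtype.val (hv t).apply_eq_smul
  · rw [← hev]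
    constructor
    · rintro ⟨w, hw, hw0, hwc⟩
      refine Module.End.hasEigenvalue_of_hasEigenvector (x := ⟨w, hw⟩) ?_
      refine Module.End.hasEigenvector_iff.2 ⟨Module.End.mem_eigenspace_iff.2 ?_, ?_⟩
      · exact Subtype.ext hwc
      · simpa using hw0
    · intro h
      obtain ⟨v, hv⟩ := h.exists_hasEigenvector
      refine ⟨v, v.2, ?_, congrArg Subtype.val hv.apply_eq_smul⟩
      simpa using hv.2

theorem succ_mul_choose_succ (k i : ℕ) :
    ((i : ℂ) + 1) * (k.choose (i + 1) : ℂ) = (k - i) * (k.choose i : ℂ) := by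
  have h1 : ((k : ℂ) + 1) * (k.choose i : ℂ) = ((k + 1).choose (i + 1) : ℂ) * (i + 1) := by
    exact_mod_cast Nat.add_one_mul_choose_eq k i
  have h2 : ((k + 1).choose (i + 1) : ℂ) = k.choose i + k.choose (i + 1) := by
    exact_mod_cast Nat.choose_succ_succ k i
  rw [h2] at h1
  linear_combination -h1

/-- The vectors `∑ᵢ (-1)ⁱ (k choose i) eᵢ` turn the tridiagonal action on the `eᵢ` into a bidiagonal
one. With `eᵢ = xⁱ y^(G-i) u^(p-i) v^(r+i)`, the `k`-th vector is
`(yu - xv)ᵏ y^(G-k) u^(p-k) vʳ`; here `p + r` plays the role of `2j`. The coefficient `G - k` of the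
next vector vanishes at `k = G`. -/
theorem bidiagonal_of_tridiagonal {W : Type*} [AddCommGroup W] [Module ℂ W] (A : W →ₗ[ℂ] W)
    (G : ℕ) (e : ℕ → W) (p r : ℂ) (he : e (G + 1) = 0)
    (hA : ∀ i ≤ G, A (e i) =
      (-((p - r - G) / 2 * ((p - r - G) / 2 + 1))
        - (G - i) * (i + 1) - (r + i) * (p - i + 1)) • e i
      + (-((G - i) * (p - i))) • e (i + 1) + (-(i * (r + i))) • e (i - 1))
    (k : ℕ) (hk : k ≤ G) :
    A (∑ i ∈ Finset.range (G + 1), ((-1) ^ i * (k.choose i : ℂ)) • e i) =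
      (-(((p + r + G) / 2 - k) * ((p + r + G) / 2 - k + 1))) •
        (∑ i ∈ Finset.range (G + 1), ((-1) ^ i * (k.choose i : ℂ)) • e i) +
      ((G - k) * (p - k)) •
        (∑ i ∈ Finset.range (G + 1), ((-1) ^ i * ((k + 1).choose i : ℂ)) • e i) := by
  -- Both off-diagonal sums are reindexed so that `e i` occurs; the boundary terms vanish because
  -- `e (G + 1) = 0` and `k.choose (G + 1) = 0`.
  have hup : ∑ i ∈ Finset.range (G + 1),
        ((-1) ^ i * (k.choose i : ℂ) * (-((G - i) * (p - i)))) • e (i + 1) =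
      ∑ i ∈ Finset.range (G + 1), ((-1) ^ i * (if i = 0 then 0 else (k.choose (i - 1) : ℂ)) *
        ((G - i + 1) * (p - i + 1))) • e i := by
    have h1 := Finset.sum_range_succ (fun i : ℕ =>
      ((-1) ^ i * (if i = 0 then 0 else (k.choose (i - 1) : ℂ)) *
        ((G - i + 1) * (p - i + 1))) • e i) (G + 1)
    rw [he, smul_zero, add_zero] at h1
    rw [← h1, Finset.sum_range_succ' _ (G + 1)]
    simp only [if_true, mul_zero, zero_mul, zero_smul, add_zero]
    refine Finset.sum_congr rfl fun i _ => ?_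
    congr 1
    rw [if_neg (Nat.succ_ne_zero i), Nat.add_sub_cancel]
    push_cast
    ring
  have hlow : ∑ i ∈ Finset.range (G + 1),
        ((-1) ^ i * (k.choose i : ℂ) * (-(i * (r + i)))) • e (i - 1) =
      ∑ i ∈ Finset.range (G + 1), ((-1) ^ i * (k.choose (i + 1) : ℂ) *
        ((i + 1) * (r + i + 1))) • e i := by
    rw [Finset.sum_range_succ', Finset.sum_range_succ _ G,
      Nat.choose_eq_zero_of_lt (Nat.lt_succ_of_le hk)]
    simp only [Nat.cast_zero, zero_mul, neg_zero, mul_zero, zero_smul, add_zero]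
    refine Finset.sum_congr rfl fun i _ => ?_
    rw [Nat.add_sub_cancel]
    congr 1
    push_cast
    ring
  have hsum : A (∑ i ∈ Finset.range (G + 1), ((-1) ^ i * (k.choose i : ℂ)) • e i) =
      ∑ i ∈ Finset.range (G + 1), ((-1) ^ i * (k.choose i : ℂ) *
        (-((p - r - G) / 2 * ((p - r - G) / 2 + 1))
        - (G - i) * (i + 1) - (r + i) * (p - i + 1))) • e i +
      ∑ i ∈ Finset.range (G + 1),
        ((-1) ^ i * (k.choose i : ℂ) * (-((G - i) * (p - i)))) • e (i + 1) +
      ∑ i ∈ Finset.range (G + 1),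
        ((-1) ^ i * (k.choose i : ℂ) * (-(i * (r + i)))) • e (i - 1) := by
    rw [map_sum, ← Finset.sum_add_distrib, ← Finset.sum_add_distrib]
    refine Finset.sum_congr rfl fun i hi => ?_
    rw [map_smul, hA i (Nat.lt_succ_iff.1 (Finset.mem_range.1 hi))]
    module
  rw [hsum, hup, hlow, Finset.smul_sum, Finset.smul_sum, ← Finset.sum_add_distrib,
    ← Finset.sum_add_distrib, ← Finset.sum_add_distrib]
  refine Finset.sum_congr rfl fun i _ => ?_
  rw [smul_smul, smul_smul, ← add_smul, ← add_smul, ← add_smul]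
  congr 1
  rcases i with _ | i
  · simp only [pow_zero, Nat.choose_zero_right, zero_add, Nat.choose_one_right, Nat.cast_zero,
      Nat.cast_one, if_true]
    ring
  · have hs := succ_mul_choose_succ k (i + 1)
    have hs' := succ_mul_choose_succ k i
    have h2 : ((k + 1).choose (i + 1) : ℂ) = k.choose i + k.choose (i + 1) := by
      exact_mod_cast Nat.choose_succ_succ k i
    rw [if_neg (Nat.succ_ne_zero i), Nat.add_sub_cancel, h2]
    push_cast at hs ⊢
    linear_combination (-1) ^ (i + 1) * (r + i + 2) * hs - (-1) ^ (i + 1) * (G + p - k - i) * hs'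

/-! ### The Casimir on a weight space -/

/-- The basis vectors of `V_M` can be rescaled by nonzero factors `s i` so that the square roots
disappear and the Casimir acts as on the monomials `xⁱ y^(G-i) u^(j+m) v^(j-m)`, where
`j + m = p - i` and `j - m = r + i`. Such factors exist because the off-diagonal entries are nonzero
(as `2j ∉ ℤ`) and a tridiagonal matrix is determined up to diagonal conjugation by its diagonal and
the products of opposite off-diagonal entries. -/
theorem exists_monomial_vectors (G : ℕ) (E j : ℂ) (hE : E = 0 ∨ E = 1 / 2)
    (hj : ¬ ∃ n : ℤ, 2 * j = (n : ℂ)) (M₀ : ℤ) (p r : ℂ) (hp : p = j + E + G + M₀)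
    (hr : r = j - E - G - M₀) :
    ∃ s : ℕ → ℂ, (∀ i ≤ G, s i ≠ 0) ∧ ∀ e : ℕ → Wc G,
      (∀ i, e i = s i • eVc G i ((G : ℤ) + M₀ - i) 1) →
      ∀ i ≤ G, Qc G j E (e i) =
        (-((p - r - G) / 2 * ((p - r - G) / 2 + 1))
          - (G - i) * (i + 1) - (r + i) * (p - i + 1)) • e i
        + (-((G - i) * (p - i))) • e (i + 1) + (-(i * (r + i))) • e (i - 1) := by
  have hint : ∀ n : ℤ, j + E + n ≠ 0 ∧ j - E + n ≠ 0 := by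
    intro n
    rcases hE with rfl | rfl
    · refine ⟨fun h => hj ⟨-2 * n, ?_⟩, fun h => hj ⟨-2 * n, ?_⟩⟩ <;>
      · push_cast
        linear_combination 2 * h
    · refine ⟨fun h => hj ⟨-2 * n - 1, ?_⟩, fun h => hj ⟨-2 * n + 1, ?_⟩⟩ <;>
      · push_cast
        linear_combination 2 * h
  have hpi : ∀ i : ℕ, p - i ≠ 0 := by
    intro i h
    apply (hint (G + M₀ - i)).1
    push_cast
    linear_combination h - hp
  have hri : ∀ i : ℕ, r + i ≠ 0 := by
    intro i h
    apply (hint (i - G - M₀)).2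
    push_cast
    linear_combination h - hr
  have hGi : ∀ i : ℕ, i < G → (G : ℂ) - i ≠ 0 := by
    intro i hi h
    have : (G : ℂ) = i := by linear_combination h
    have : G = i := by exact_mod_cast this
    omega
  have hi1 : ∀ i : ℕ, (i : ℂ) + 1 ≠ 0 := fun i => Nat.cast_add_one_ne_zero i
  let μ : ℕ → ℂ := fun i => (i : ℂ) - gam G
  let m : ℕ → ℂ := fun i => p - i - j
  let U : ℕ → ℂ := fun i => Cp (gam G) (μ i) * Cm j (m i)
  have hU : ∀ i < G, U i ≠ 0 := by
    intro i hi
    refine mul_ne_zero (Cp_ne_zero ?_ ?_) (Cm_ne_zero ?_ ?_)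
    · convert hGi i hi using 1
      simp only [μ, gam]; ring
    · convert hi1 i using 1
      simp only [μ, gam]; ring
    · convert hpi i using 1
      simp only [m]; ring
    · convert hri (i + 1) using 1
      simp only [m, hp, hr]; push_cast; ring
  have hUL : ∀ i, U i * (Cm (gam G) (μ (i + 1)) * Cp j (m (i + 1))) =
      (G - i) * (i + 1) * (r + i + 1) * (p - i) := by
    intro i
    have e1 : μ (i + 1) = μ i + 1 := by simp only [μ]; push_cast; ring
    have e2 : m i = m (i + 1) + 1 := by simp only [m]; push_cast; ring
    have h1 := Cp_mul_Cm (gam G) (μ i)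
    have h2 := Cp_mul_Cm j (m (i + 1))
    rw [← e1] at h1
    rw [← e2] at h2
    calc _ = (Cp (gam G) (μ i) * Cm (gam G) (μ (i + 1))) *
          (Cp j (m (i + 1)) * Cm j (m i)) := by simp only [U]; ring
      _ = _ := by
        rw [h1, h2]
        simp only [m, μ, gam, hp, hr]
        push_cast
        ring
  -- The factors are forced by the entries raising `i`.
  let s : ℕ → ℂ := fun n => ∏ i ∈ Finset.range n, (U i / (-((G - i) * (p - i))))
  have hs0 : ∀ i ≤ G, s i ≠ 0 := by
    intro i hi
    refine Finset.prod_ne_zero_iff.2 fun l hl => ?_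
    have hl' : l < G := lt_of_lt_of_le (Finset.mem_range.1 hl) hi
    exact div_ne_zero (hU l hl') (neg_ne_zero.2 (mul_ne_zero (hGi l hl') (hpi l)))
  have hs : ∀ i < G, -((G - i) * (p - i)) * s (i + 1) = s i * U i := by
    intro i hi
    have h1 := hGi i hi
    have h2 := hpi i
    simp only [s, Finset.prod_range_succ]
    field_simp
  refine ⟨s, hs0, fun e he i hi => ?_⟩
  have hup : (s i * U i) • eVc G ((i : ℤ) + 1) ((G : ℤ) + M₀ - i - 1) 1 =
      (-((G - i) * (p - i))) • e (i + 1) := by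
    rw [he, smul_smul]
    rcases lt_or_eq_of_le hi with h | h
    · rw [hs i h]
      push_cast
      rw [sub_sub]
    · rw [eVc_of_out (by omega), eVc_of_out (by push_cast; omega), smul_zero, smul_zero]
  have hlow : (s i * (Cm (gam G) (μ i) * Cp j (m i))) •
      eVc G ((i : ℤ) - 1) ((G : ℤ) + M₀ - i + 1) 1 = (-(i * (r + i))) • e (i - 1) := by
    rcases i with _ | i
    · rw [eVc_of_out (by simp)]
      simp
    · rw [he, smul_smul, Nat.add_sub_cancel]
      have h1 := hUL i
      have h2 := hs i hi
      have h3 := hU i hi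
      have h4 : s (i + 1) * (Cm (gam G) (μ (i + 1)) * Cp j (m (i + 1))) =
          -(((i + 1 : ℕ) : ℂ) * (r + ((i + 1 : ℕ) : ℂ))) * s i := by
        apply mul_left_cancel₀ (mul_ne_zero (neg_ne_zero.2 (mul_ne_zero (hGi i hi) (hpi i))) h3)
        push_cast
        linear_combination (U i * (Cm (gam G) (μ (i + 1)) * Cp j (m (i + 1)))) * h2 +
          s i * U i * h1
      rw [h4]
      congr 2 <;> push_cast <;> ring
  have hm : m i = mcont E ((G : ℤ) + M₀ - i) := by
    simp only [m, mcont, hp]; push_cast; ring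
  have hQ := Qc_eVc G j E i ((G : ℤ) + M₀ - i) (μ i) (m i) (by simp [μ]) hm
  rw [← hup, ← hlow, he, map_smul, hQ]
  have hd : -((μ i + m i) * (μ i + m i + 1)) - (gam G - μ i) * (gam G + μ i + 1) -
      (j - m i) * (j + m i + 1) = -((p - r - G) / 2 * ((p - r - G) / 2 + 1))
          - (G - i) * (i + 1) - (r + i) * (p - i + 1) := by
    simp only [m, μ, gam, hp, hr]; ring
  rw [hd]
  simp only [U]
  module

theorem qc_injective (G : ℕ) (j : ℂ) (hj : ¬ ∃ n : ℤ, 2 * j = (n : ℂ)) :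
    Function.Injective (qc G j) := by
  intro t t' h
  have h1 : ((t : ℕ) - (t' : ℕ) : ℂ) * (2 * j + (t : ℕ) + (t' : ℕ) - G + 1) = 0 := by
    simp only [qc, muc, gam] at h
    linear_combination -h
  rcases mul_eq_zero.1 h1 with h2 | h2
  · apply Fin.ext
    have : ((t : ℕ) : ℂ) = (t' : ℕ) := by linear_combination h2
    exact_mod_cast this
  · exact absurd ⟨(G : ℤ) - (t : ℕ) - (t' : ℕ) - 1, by push_cast; linear_combination h2⟩ hj

/-- A basis of `V_M` in which the Casimir is upper bidiagonal with diagonal entries `q_(μ)`. The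
Pascal vectors are listed in reverse order, since the `k`-th one carries `-(j+γ-k)(j+γ-k+1)`. -/
theorem exists_triangular_basis (G : ℕ) (E j : ℂ) (hE : E = 0 ∨ E = 1 / 2)
    (hj : ¬ ∃ n : ℤ, 2 * j = (n : ℂ)) (M₀ : ℤ) :
    ∃ f : Fin (G + 1) → Wc G, LinearIndependent ℂ f ∧
      Submodule.span ℂ (Set.range f) = VMc G M₀ ∧
      ∀ t, Qc G j E (f t) - qc G j t • f t ∈ Submodule.span ℂ (f '' Set.Iio t) := by
  obtain ⟨s, hs0, hs⟩ := exists_monomial_vectors G E j hE hj M₀ _ _ rfl rfl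
  let b : Fin (G + 1) → Wc G := fun ν => Finsupp.single (ν, (G : ℤ) + M₀ - (ν : ℕ)) 1
  let e : ℕ → Wc G := fun i => s i • eVc G i ((G : ℤ) + M₀ - i) 1
  have heb : ∀ ν : Fin (G + 1), e ν = s ν • b ν := fun ν => by
    simp only [e, b]
    rw [eVc_of_fin]
  have he0 : e (G + 1) = 0 := by
    simp only [e]
    rw [eVc_of_out (by push_cast; omega), smul_zero]
  let g : ℕ → Wc G := fun k =>
    ∑ i ∈ Finset.range (G + 1), ((-1) ^ i * (k.choose i : ℂ)) • e i
  have hg := bidiagonal_of_tridiagonal (Qc G j E) G e _ _ he0 (hs e fun _ => rfl)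
  let f : Fin (G + 1) → Wc G := fun t => g (G - t)
  have hV : VMc G M₀ = Submodule.span ℂ (Set.range b) := by
    rw [VMc]
    congr 1
    ext w
    simp [b, eq_comm]
  have heV : ∀ i ≤ G, e i ∈ VMc G M₀ := by
    intro i hi
    rw [hV, show e i = s i • b ⟨i, by omega⟩ from heb ⟨i, by omega⟩]
    exact Submodule.smul_mem _ _ (Submodule.subset_span ⟨_, rfl⟩)
  have hgf : ∀ k ≤ G, g k ∈ Submodule.span ℂ (Set.range f) := by
    intro k hk
    refine Submodule.subset_span ⟨⟨G - k, by omega⟩, ?_⟩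
    simp only [f]
    congr 1
    omega
  -- The Pascal matrix is triangular with diagonal entries `±1`, so each `e k` is recovered.
  have hef : ∀ k, k ≤ G → e k ∈ Submodule.span ℂ (Set.range f) := by
    intro k
    induction k using Nat.strong_induction_on with
    | _ k ih =>
      intro hk
      have h1 : g k = ∑ i ∈ Finset.range (k + 1), ((-1) ^ i * (k.choose i : ℂ)) • e i := by
        refine (Finset.sum_subset (Finset.range_subset_range.2 (by omega)) ?_).symm
        intro i _ hi
        rw [Nat.choose_eq_zero_of_lt (by simpa using hi)]
        simp
      rw [Finset.sum_range_succ, Nat.choose_self] at h1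
      have h2 : e k = ((-1 : ℂ) ^ k) • (g k -
          ∑ i ∈ Finset.range k, ((-1) ^ i * (k.choose i : ℂ)) • e i) := by
        rw [h1, add_sub_cancel_left, smul_smul, Nat.cast_one, mul_one, ← mul_pow]
        simp
      rw [h2]
      refine Submodule.smul_mem _ _ (Submodule.sub_mem _ (hgf k hk) (Submodule.sum_mem _ ?_))
      intro i hi
      have hi := Finset.mem_range.1 hi
      exact Submodule.smul_mem _ _ (ih i hi (by omega))
  have hspan : Submodule.span ℂ (Set.range f) = VMc G M₀ := by
    apply le_antisymm
    · rw [Submodule.span_le]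
      rintro _ ⟨t, rfl⟩
      refine Submodule.sum_mem _ fun i hi => Submodule.smul_mem _ _ (heV i ?_)
      have := Finset.mem_range.1 hi
      omega
    · rw [hV, Submodule.span_le]
      rintro _ ⟨ν, rfl⟩
      have h0 := hs0 ν (by omega)
      have : b ν = (s ν)⁻¹ • e ν := by rw [heb, smul_smul, inv_mul_cancel₀ h0, one_smul]
      rw [this]
      exact Submodule.smul_mem _ _ (hef ν (by omega))
  have hb : LinearIndependent ℂ b := by
    have hinj : Function.Injective
        (fun ν : Fin (G + 1) => (ν, (G : ℤ) + M₀ - ((ν : ℕ) : ℤ))) :=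
      fun _ _ h => (Prod.ext_iff.1 h).1
    have := (Finsupp.basisSingleOne (R := ℂ) (ι := Fin (G + 1) × ℤ)).linearIndependent.comp _ hinj
    simpa [Function.comp_def, b] using this
  have hf : LinearIndependent ℂ f := by
    rw [linearIndependent_iff_card_eq_finrank_span] at hb ⊢
    rw [hb, Set.finrank, Set.finrank, hspan, hV]
  refine ⟨f, hf, hspan, fun t => ?_⟩
  have hk : ((G - (t : ℕ) : ℕ) : ℂ) = G - (t : ℕ) := by
    rw [Nat.cast_sub (by omega)]
  have h1 := hg (G - t) (by omega)
  change Qc G j E (f t) = _ • f t + _ • g (G - t + 1) at h1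
  have hqt : -(((j + E + G + M₀ + (j - E - G - M₀) + G) / 2 - ((G - (t : ℕ) : ℕ) : ℂ)) *
      ((j + E + G + M₀ + (j - E - G - M₀) + G) / 2 - ((G - (t : ℕ) : ℕ) : ℂ) + 1)) =
        qc G j t := by
    rw [hk, qc, muc, gam]
    ring
  rw [h1, hqt, add_sub_cancel_left]
  rcases Nat.eq_zero_or_pos (t : ℕ) with h0 | h0
  · rw [hk, h0]
    simp
  · refine Submodule.smul_mem _ _ (Submodule.subset_span
      ⟨⟨(t : ℕ) - 1, by omega⟩, Fin.lt_def.2 (by simp only; omega), ?_⟩)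
    simp only [f]
    congr 1
    omega

/-- For 2j ∉ ℤ, the restriction of 𝒬 to each V_M is diagonalizable with
eigenvalues exactly the 2γ+1 pairwise distinct values q_(μ), μ ∈ {-γ,...,γ};
consequently 𝒬 is diagonalizable on F_γ ⊗ C^ε_j. -/
theorem Qc_diagonalizable_of_not_half_integer (G : ℕ) (hG : 1 ≤ G) (E j : ℂ)
    (hE : E = 0 ∨ E = 1 / 2) (hj : ¬ ∃ n : ℤ, 2 * j = (n : ℂ)) :
    (∀ M₀ : ℤ,
      DiagOn (Qc G j E) (VMc G M₀) ∧
      (∀ c : ℂ,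
        (∃ w ∈ VMc G M₀, w ≠ 0 ∧ Qc G j E w = c • w) ↔ ∃ t : Fin (G + 1), c = qc G j t) ∧
      (∀ t t' : Fin (G + 1), qc G j t = qc G j t' → t = t')) ∧
    DiagOn (Qc G j E) (⊤ : Submodule ℂ (Wc G)) := by
  have hM : ∀ M₀ : ℤ, DiagOn (Qc G j E) (VMc G M₀) ∧
      ∀ c : ℂ, (∃ w ∈ VMc G M₀, w ≠ 0 ∧ Qc G j E w = c • w) ↔
        ∃ t : Fin (G + 1), c = qc G j t := by
    intro M₀
    obtain ⟨f, hf, hspan, hA⟩ := exists_triangular_basis G E j hE hj M₀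
    rw [← hspan]
    exact diagOn_of_triangular (Qc G j E) f hf (qc G j) (qc_injective G j hj) hA
  refine ⟨fun M₀ => ⟨(hM M₀).1, (hM M₀).2, fun t t' h => qc_injective G j hj h⟩, ?_⟩
  refine eq_top_iff.2 ((Finsupp.basisSingleOne (R := ℂ)).span_eq.ge.trans ?_)
  rw [Submodule.span_le]
  rintro _ ⟨⟨ν, z⟩, rfl⟩
  -- Each basis vector is a weight vector, hence lies in one of the diagonalizable `V_M`.
  have hmem : Finsupp.single (ν, z) (1 : ℂ) ∈ VMc G (z + (ν : ℕ) - G) := by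
    refine Submodule.subset_span ⟨ν, ?_⟩
    congr 2
    omega
  rw [← (hM _).1] at hmem
  rw [Finsupp.coe_basisSingleOne]
  refine Submodule.span_mono ?_ hmem
  rintro w ⟨-, hw⟩
  exact ⟨Submodule.mem_top, hw⟩

end
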